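/- Let M be a g-module admitting a finite chain 0 = M_0 ⊆ M_1 ⊆ ⋯ ⊆ M_r = M of g-submodules such that each quotient g-module M_i/M_{i-1} is good. Then M is good, i.e., M = U_{≤n}·V for some n ≥ 0 and some finite-dimensional subspace V of M. -/

import Mathlib

/-!
Forming `U_{≤n}·V` is monotone in `V` and `n` and commutes with homomorphisms of `g`-modules
(`map_Ule`). By induction along the chain, each `M_i` is contained in some `U_{≤n}·V` with `V`
finite-dimensional. For the step from `M_i` to `M_{i+1}`, lift a finite-dimensional subspace
generating `M_{i+1}/M_i` in degree `≤ n'` to a finite-dimensional `W ⊆ M_{i+1}`; then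
`M_{i+1} ⊆ U_{≤n'}·W + M_i ⊆ U_{≤max(n,n')}·(V + W)`.
-/

/-- `Ule k g M V n` is `U_{≤n}·V`: the span of all `x₁ · (x₂ · (⋯(x_j · v)⋯))` with
`0 ≤ j ≤ n`, `xᵢ ∈ g`, `v ∈ V`. -/
def Ule (k : Type*) [Field k] (g : Type*) [LieRing g] [LieAlgebra k g]
    (M : Type*) [AddCommGroup M] [Module k M] [LieRingModule g M] [LieModule k g M]
    (V : Submodule k M) : ℕ → Submodule k M
  | 0 => V
  | n + 1 => Ule k g M V n ⊔
      Submodule.span k {m : M | ∃ x : g, ∃ v ∈ Ule k g M V n, ⁅x, v⁆ = m}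

/-- A `g`-module `M` is good if `M = U_{≤n}·V` for some `n ≥ 0` and some finite-dimensional
subspace `V` of `M`. -/
def IsGood (k : Type*) [Field k] (g : Type*) [LieRing g] [LieAlgebra k g]
    (M : Type*) [AddCommGroup M] [Module k M] [LieRingModule g M] [LieModule k g M] : Prop :=
  ∃ (n : ℕ) (V : Submodule k M), FiniteDimensional k V ∧ Ule k g M V n = ⊤

section

variable {k : Type*} [Field k] {g : Type*} [LieRing g] [LieAlgebra k g]
  {M : Type*} [AddCommGroup M] [Module k M] [LieRingModule g M] [LieModule k g M]
  {N : Type*} [AddCommGroup N] [Module k N] [LieRingModule g N] [LieModule k g N]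

theorem Ule_mono_left {V W : Submodule k M} (h : V ≤ W) (n : ℕ) :
    Ule k g M V n ≤ Ule k g M W n := by
  induction n with
  | zero => exact h
  | succ n ih =>
    refine sup_le_sup ih (Submodule.span_mono ?_)
    rintro m ⟨x, v, hv, rfl⟩
    exact ⟨x, v, ih hv, rfl⟩

theorem Ule_mono_right (V : Submodule k M) : Monotone (Ule k g M V) :=
  monotone_nat_of_le_succ fun _ => le_sup_left

theorem map_Ule (f : M →ₗ⁅k,g⁆ N) (V : Submodule k M) (n : ℕ) :
    (Ule k g M V n).map (f : M →ₗ[k] N) = Ule k g N (V.map (f : M →ₗ[k] N)) n := by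
  induction n with
  | zero => rfl
  | succ n ih =>
    rw [Ule, Ule, Submodule.map_sup, Submodule.map_span, ih]
    congr 2
    ext m
    rw [← ih]
    constructor
    · rintro ⟨_, ⟨x, v, hv, rfl⟩, rfl⟩
      exact ⟨x, f v, Submodule.mem_map_of_mem hv, (f.map_lie x v).symm⟩
    · rintro ⟨x, _, ⟨v, hv, rfl⟩, rfl⟩
      exact ⟨⁅x, v⁆, ⟨x, v, hv, rfl⟩, f.map_lie x v⟩

/-- A good quotient `N/P` is generated, in bounded degree and modulo `P`, by a finite-dimensional
subspace of `N`. -/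
theorem exists_lift_of_isGood_quotient (P : LieSubmodule k g N) (h : IsGood k g (N ⧸ P)) :
    ∃ (n : ℕ) (W : Submodule k N), FiniteDimensional k W ∧
      ∀ m : N, ∃ u ∈ Ule k g N W n, m - u ∈ P := by
  obtain ⟨n, V, hV, htop⟩ := h
  let f : N →ₗ⁅k,g⁆ N ⧸ P := LieSubmodule.Quotient.mk' P
  have hf : Function.Surjective (f : N →ₗ[k] N ⧸ P) := LieSubmodule.Quotient.surjective_mk' P
  obtain ⟨s, hs⟩ := LinearMap.exists_rightInverse_of_surjective _ (LinearMap.range_eq_top.2 hf)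
  refine ⟨n, V.map s, inferInstance, fun m => ?_⟩
  have hmap : (Ule k g N (V.map s) n).map (f : N →ₗ[k] N ⧸ P) = ⊤ := by
    rw [map_Ule, ← Submodule.map_comp, hs, Submodule.map_id, htop]
  obtain ⟨u, hu, hum⟩ : f m ∈ (Ule k g N (V.map s) n).map (f : N →ₗ[k] N ⧸ P) := by
    rw [hmap]; trivial
  refine ⟨u, hu, ?_⟩
  rw [← LieSubmodule.Quotient.mk_eq_zero]
  change f (m - u) = 0
  rw [map_sub, sub_eq_zero]
  exact hum.symm

end

/-- If a `g`-module `M` has a finite chain `0 = M₀ ⊆ M₁ ⊆ ⋯ ⊆ M_r = M` of `g`-submodules whose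
successive quotients are good, then `M` is good. -/
theorem isGood_of_chain {k : Type*} [Field k] {g : Type*} [LieRing g] [LieAlgebra k g]
    {M : Type*} [AddCommGroup M] [Module k M] [LieRingModule g M] [LieModule k g M]
    (r : ℕ) (c : Fin (r + 1) → LieSubmodule k g M)
    (h0 : c 0 = ⊥) (hr : c (Fin.last r) = ⊤)
    (hmono : ∀ i : Fin r, c i.castSucc ≤ c i.succ)
    (hgood : ∀ i : Fin r,
      IsGood k g ((c i.succ : LieSubmodule k g M) ⧸
        LieSubmodule.comap (c i.succ).incl (c i.castSucc))) :
    IsGood k g M := by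
  have key : ∀ i : Fin (r + 1), ∃ (n : ℕ) (V : Submodule k M), FiniteDimensional k V ∧
      (c i : Submodule k M) ≤ Ule k g M V n := by
    intro i
    induction i using Fin.induction with
    | zero => exact ⟨0, ⊥, inferInstance, by simp [h0]⟩
    | succ i ih =>
      obtain ⟨n, V, hV, hle⟩ := ih
      obtain ⟨n', W, hW, hlift⟩ := exists_lift_of_isGood_quotient _ (hgood i)
      let j : c i.succ →ₗ⁅k,g⁆ M := (c i.succ).incl
      refine ⟨max n n', V ⊔ W.map (j : c i.succ →ₗ[k] M), inferInstance, fun m hm => ?_⟩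
      obtain ⟨u, hu, hmu⟩ := hlift ⟨m, hm⟩
      have h1 : (u : M) ∈ Ule k g M (W.map (j : c i.succ →ₗ[k] M)) n' := by
        rw [← map_Ule]
        exact Submodule.mem_map_of_mem hu
      have h2 : m - (u : M) ∈ Ule k g M V n := hle hmu
      rw [← sub_add_cancel m (u : M)]
      exact add_mem
        (Ule_mono_right _ (le_max_left n n') (Ule_mono_left le_sup_left _ h2))
        (Ule_mono_right _ (le_max_right n n') (Ule_mono_left le_sup_right _ h1))
  obtain ⟨n, V, hV, hle⟩ := key (Fin.last r)
  refine ⟨n, V, hV, top_le_iff.1 ?_⟩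
  simpa [hr] using hle
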